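/- arXiv:0903.1532 — 3 statements merged into one kernel-verified Lean document; each statement's English description precedes it below -/
import Mathlib

section
/- A finite sequence [ω_1, …, ω_p] of positive integers is the global orbit pattern of some function f ∈ F_N if and only if ω_1 + ω_2 + ⋯ + ω_p ≤ N. -/
/-!
For a given `f`, the order of a point `x` counts distinct points on the forward orbit of `x`
(namely its cycle), and forward orbits of the least elements of different components are disjoint;
so the orders in `gop f` sum to at most `N` (`sum_gop_le`).

Conversely, if `L.sum ≤ N`, cut the first `L.sum` points of `Fin N` into consecutive blocks whose
lengths are the entries of `L`, let `f` rotate each block cyclically, and send every remaining point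
to `0` (`blockMap`). The remaining points join the component of the first block, so the least
elements of the components are exactly the first points of the blocks, and their orders are the
lengths of the blocks. The blocks are handled through Mathlib's `Composition`.
-/

open scoped Classical

/-- Two points are in the same component of `X_N` under `f`:
`x ~ y` iff some forward iterate of `x` equals some forward iterate of `y`. -/
def sameComp {N : ℕ} (f : Fin N → Fin N) (x y : Fin N) : Prop :=
  ∃ k l : ℕ, f^[k] x = f^[l] y

/-- The order `ω(x, f)` of a point `x`: the length of the periodic cycle contained in
the component of `x`, i.e. the least `p > 0` such that the orbit of `x` is eventually
`p`-periodic. -/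
noncomputable def gopOrd {N : ℕ} (f : Fin N → Fin N) (x : Fin N) : ℕ :=
  sInf {p : ℕ | 0 < p ∧ ∃ K : ℕ, f^[K + p] x = f^[K] x}

/-- The global orbit pattern of `f`: the list of orders of the least elements of the
components of `X_N` under `f`, listed in increasing order of those least elements. -/
noncomputable def gop {N : ℕ} (f : Fin N → Fin N) : List ℕ :=
  ((Finset.univ.filter (fun x : Fin N => ∀ y : Fin N, sameComp f x y → x ≤ y)).sort (· ≤ ·)).map
    (gopOrd f)

/-- The forward orbit of `x` contains `gopOrd f x` distinct points. -/
lemma exists_orbit_finset {N : ℕ} (f : Fin N → Fin N) (x : Fin N) :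
    ∃ s : Finset (Fin N), s.card = gopOrd f x ∧ ∀ y ∈ s, ∃ k, f^[k] x = y := by
  rcases Nat.eq_zero_or_pos (gopOrd f x) with h0 | hpos
  · exact ⟨∅, by simp [h0], by simp⟩
  obtain ⟨-, K, hK⟩ := Nat.sInf_mem (Nat.nonempty_of_pos_sInf hpos)
  refine ⟨(Finset.range (gopOrd f x)).image fun i => f^[K + i] x, ?_, ?_⟩
  · rw [Finset.card_image_of_injOn, Finset.card_range]
    -- A coincidence at `i < j` would make the orbit eventually `(j - i)`-periodic.
    have key : ∀ i j, i < j → j < gopOrd f x → f^[K + i] x ≠ f^[K + j] x := by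
      intro i j hij hj h
      have : gopOrd f x ≤ j - i := Nat.sInf_le ⟨by omega, K + i, by
        rw [show K + i + (j - i) = K + j by omega, h]⟩
      omega
    intro i hi j hj h
    simp only [Finset.coe_range, Set.mem_Iio] at hi hj
    rcases lt_trichotomy i j with hij | hij | hij
    · exact absurd h (key i j hij hj)
    · exact hij
    · exact absurd h.symm (key j i hij hi)
  · intro y hy
    obtain ⟨i, -, rfl⟩ := Finset.mem_image.1 hy
    exact ⟨_, rfl⟩

lemma sum_gop_le {N : ℕ} (f : Fin N → Fin N) : (gop f).sum ≤ N := by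
  choose s hcard horb using exists_orbit_finset f
  unfold gop
  set S := Finset.univ.filter (fun x : Fin N => ∀ y : Fin N, sameComp f x y → x ≤ y) with hS
  have hsum : ((S.sort (· ≤ ·)).map (gopOrd f)).sum = ∑ x ∈ S, (s x).card := by
    rw [← List.sum_toFinset _ (S.sort_nodup _), Finset.sort_toFinset]
    exact Finset.sum_congr rfl fun x _ => (hcard x).symm
  rw [hsum, ← Finset.card_biUnion]
  · simpa using Finset.card_le_univ (S.biUnion s)
  · intro x hx y hy hxy
    refine Finset.disjoint_left.2 fun z hzx hzy => hxy ?_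
    obtain ⟨k, hk⟩ := horb x z hzx
    obtain ⟨l, hl⟩ := horb y z hzy
    simp only [hS, Finset.coe_filter, Finset.mem_univ, true_and, Set.mem_ofPred_eq] at hx hy
    exact le_antisymm (hx y ⟨k, l, hk.trans hl.symm⟩) (hy x ⟨l, k, hl.trans hk.symm⟩)

/-- If `b` labels the points by an `f`-invariant index, and every point flows into the point `s i`
of its label `i`, which is also the least point with that label, then the `s i` are the least
elements of the components, and `gop f` lists their orders. -/
lemma gop_eq_ofFn {N p : ℕ} (f : Fin N → Fin N) (b : Fin N → Fin p) (s : Fin p → Fin N)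
    (hs : StrictMono s) (hbs : ∀ i, b (s i) = i) (hbf : ∀ x, b (f x) = b x)
    (hle : ∀ x, s (b x) ≤ x) (hreach : ∀ x, ∃ k, f^[k] x = s (b x)) :
    gop f = List.ofFn fun i => gopOrd f (s i) := by
  have hiter : ∀ k x, b (f^[k] x) = b x := by
    intro k
    induction k with
    | zero => intro x; rfl
    | succ k ih => intro x; rw [Function.iterate_succ_apply, ih, hbf]
  have hset : Finset.univ.filter (fun x : Fin N => ∀ y : Fin N, sameComp f x y → x ≤ y)
      = (List.ofFn s).toFinset := by
    ext x
    simp only [Finset.mem_filter, Finset.mem_univ, true_and, List.mem_toFinset, List.mem_ofFn]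
    constructor
    · intro h
      obtain ⟨k, hk⟩ := hreach x
      exact ⟨b x, le_antisymm (hle x) (h _ ⟨k, 0, hk⟩)⟩
    · rintro ⟨i, rfl⟩ y ⟨k, l, hkl⟩
      have hb : i = b y := by rw [← hbs i, ← hiter k, hkl, hiter]
      rw [hb]
      exact hle y
  have hsort : (List.ofFn s).toFinset.sort (· ≤ ·) = List.ofFn s :=
    (List.toFinset_sort _ (List.nodup_ofFn.2 hs.injective)).2
      (List.pairwise_ofFn.2 fun _ _ hij => (hs hij).le)
  unfold gop
  rw [hset, hsort, List.map_ofFn]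
  rfl

/-- The first `M` points are cut into the consecutive blocks of the composition `c`, each of which is
rotated cyclically; all later points are sent to `0`. -/
def blockMap {N M : ℕ} (c : Composition M) (hM : M ≤ N) (hN : 0 < N) (x : Fin N) : Fin N :=
  if h : (x : ℕ) < M then
    Fin.castLE hM (c.embedding (c.index ⟨x, h⟩)
      ⟨((c.invEmbedding ⟨x, h⟩ : ℕ) + 1) % c.blocksFun (c.index ⟨x, h⟩),
        Nat.mod_lt _ (c.one_le_blocksFun _)⟩)
  else ⟨0, hN⟩

/-- The `j`-th point, counted modulo the length of the block, of the `i`-th block of `c`. -/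
def blockPt {N M : ℕ} (c : Composition M) (hM : M ≤ N) (i : Fin c.length) (j : ℕ) : Fin N :=
  Fin.castLE hM (c.embedding i ⟨j % c.blocksFun i, Nat.mod_lt _ (c.one_le_blocksFun _)⟩)

section

variable {N M : ℕ} (c : Composition M) (hM : M ≤ N) (hN : 0 < N)

lemma coe_blockPt (i : Fin c.length) (j : ℕ) :
    (blockPt c hM i j : ℕ) = c.sizeUpTo i + j % c.blocksFun i := by
  simp [blockPt]

lemma blockPt_lt (i : Fin c.length) (j : ℕ) : (blockPt c hM i j : ℕ) < M :=
  Fin.is_lt (c.embedding i ⟨j % c.blocksFun i, Nat.mod_lt _ (c.one_le_blocksFun _)⟩)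

lemma index_blockPt (i : Fin c.length) (j : ℕ) :
    c.index ⟨blockPt c hM i j, blockPt_lt c hM i j⟩ = i :=
  c.index_embedding i ⟨j % c.blocksFun i, Nat.mod_lt _ (c.one_le_blocksFun _)⟩

lemma eq_blockPt (x : Fin N) (h : (x : ℕ) < M) :
    x = blockPt c hM (c.index ⟨x, h⟩) (c.invEmbedding ⟨x, h⟩) := by
  apply Fin.ext
  rw [coe_blockPt, Nat.mod_eq_of_lt (c.invEmbedding ⟨x, h⟩).2, c.coe_invEmbedding]
  have : c.sizeUpTo (c.index ⟨x, h⟩) ≤ x := c.sizeUpTo_index_le ⟨x, h⟩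
  simp only
  omega

lemma blockMap_blockPt (i : Fin c.length) (j : ℕ) :
    blockMap c hM hN (blockPt c hM i j) = blockPt c hM i (j + 1) := by
  rw [blockMap, dif_pos (blockPt_lt c hM i j)]
  apply Fin.ext
  rw [coe_blockPt c hM i (j + 1)]
  simp only [Fin.val_castLE, Composition.coe_embedding, Composition.coe_invEmbedding,
    index_blockPt]
  simp only [coe_blockPt, add_tsub_cancel_left, Nat.mod_add_mod]

lemma iterate_blockMap_blockPt (i : Fin c.length) (j k : ℕ) :
    (blockMap c hM hN)^[k] (blockPt c hM i j) = blockPt c hM i (j + k) := by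
  induction k with
  | zero => rfl
  | succ k ih => rw [Function.iterate_succ_apply', ih, blockMap_blockPt, add_assoc]

lemma gopOrd_blockMap (i : Fin c.length) :
    gopOrd (blockMap c hM hN) (blockPt c hM i 0) = c.blocksFun i := by
  have hpos : 0 < c.blocksFun i := c.one_le_blocksFun i
  have hset : {p : ℕ | 0 < p ∧ ∃ K : ℕ, (blockMap c hM hN)^[K + p] (blockPt c hM i 0)
      = (blockMap c hM hN)^[K] (blockPt c hM i 0)} = {p | 0 < p ∧ c.blocksFun i ∣ p} := by
    ext p
    simp only [Set.mem_ofPred_eq, iterate_blockMap_blockPt, zero_add, Fin.ext_iff, coe_blockPt,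
      add_right_inj]
    refine and_congr_right fun _ => ⟨?_, fun h => ⟨0, ?_⟩⟩
    · rintro ⟨K, hK⟩
      exact (Nat.modEq_zero_iff_dvd).1 (Nat.ModEq.add_left_cancel' K hK)
    · simpa using Nat.mod_eq_zero_of_dvd h
  rw [gopOrd, hset]
  apply le_antisymm
  · exact Nat.sInf_le ⟨hpos, dvd_rfl⟩
  · obtain ⟨hp, hd⟩ := Nat.sInf_mem (s := {p | 0 < p ∧ c.blocksFun i ∣ p}) ⟨_, hpos, dvd_rfl⟩
    exact Nat.le_of_dvd hp hd

lemma gop_blockMap (hc : 0 < c.length) : gop (blockMap c hM hN) = c.blocks := by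
  -- The points outside the blocks flow into the first block, hence carry the label `0`.
  let b : Fin N → Fin c.length := fun x => if h : (x : ℕ) < M then c.index ⟨x, h⟩ else ⟨0, hc⟩
  have hb : ∀ i j, b (blockPt c hM i j) = i := fun i j => by
    simp only [b, dif_pos (blockPt_lt c hM i j), index_blockPt]
  have hout : ∀ x : Fin N, ¬ (x : ℕ) < M → blockMap c hM hN x = blockPt c hM ⟨0, hc⟩ 0 := by
    intro x hx
    rw [blockMap, dif_neg hx]
    apply Fin.ext
    simp [coe_blockPt]
  rw [gop_eq_ofFn (blockMap c hM hN) b (fun i => blockPt c hM i 0)]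
  · simp only [gopOrd_blockMap, Composition.ofFn_blocksFun]
  · intro i j hij
    rw [Fin.lt_def, coe_blockPt, coe_blockPt, Nat.zero_mod, Nat.zero_mod]
    exact (c.sizeUpTo_strict_mono i.2).trans_le (c.monotone_sizeUpTo hij)
  · exact fun i => hb i 0
  · intro x
    by_cases h : (x : ℕ) < M
    · rw [eq_blockPt c hM x h, blockMap_blockPt, hb, hb]
    · rw [hout x h, hb]
      simp only [b, dif_neg h]
  · intro x
    rw [Fin.le_def, coe_blockPt, Nat.zero_mod, add_zero]
    by_cases h : (x : ℕ) < M
    · simp only [b, dif_pos h]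
      exact c.sizeUpTo_index_le ⟨x, h⟩
    · simp [b, dif_neg h]
  · intro x
    by_cases h : (x : ℕ) < M
    · rw [eq_blockPt c hM x h, hb]
      set i := c.index ⟨x, h⟩
      set j := c.invEmbedding ⟨x, h⟩
      refine ⟨c.blocksFun i - j, ?_⟩
      rw [iterate_blockMap_blockPt, Nat.add_sub_cancel' j.2.le]
      apply Fin.ext
      simp [coe_blockPt]
    · refine ⟨1, ?_⟩
      rw [Function.iterate_one, hout x h]
      simp only [b, dif_neg h]

end

/-- a finite nonempty sequence `[ω_1, …, ω_p]` of positive integers is the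
global orbit pattern of some `f ∈ F_N` if and only if `ω_1 + ⋯ + ω_p ≤ N`. -/
theorem exists_gop_iff_sum_le (N : ℕ) (hN : 0 < N) (L : List ℕ)
    (hpos : ∀ a ∈ L, 0 < a) (hne : L ≠ []) :
    (∃ f : Fin N → Fin N, gop f = L) ↔ L.sum ≤ N := by
  constructor
  · rintro ⟨f, rfl⟩
    exact sum_gop_le f
  · intro h
    let c : Composition L.sum := ⟨L, fun {a} ha => hpos a ha, rfl⟩
    exact ⟨blockMap c h hN, gop_blockMap c h hN (List.length_pos_iff.2 hne)⟩
end

section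
/- For every integer k with 1 ≤ k ≤ N, the number of functions f ∈ F_N whose global orbit pattern is the sequence [1, 1, …, 1] consisting of k ones (equivalently: f has exactly k fixed points and every periodic point of f is a fixed point) equals C(N−1, N−k) · N^{N−k}. -/
/-!
A function whose global orbit pattern is `[1, …, 1]` (`k` ones) is the parent map of a rooted
forest with `k` trees, the roots being the fixed points (`gop_eq_replicate_iff`). Forests are
counted by Pitman's double counting. Let `T k` be the number of rooted forests with `k` roots on
`N` vertices. Detaching a non-root vertex from its parent turns a forest with `k` roots into one
with `k + 1` roots; conversely a forest with `k + 1` roots, a vertex `v`, and a root `r` of a tree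
not containing `v` give back a forest with `k` roots by making `v` the parent of `r`. These
operations are mutually inverse, hence `T k * (N - k) = T (k + 1) * (N * k)`
(`forests_recurrence`). Starting from `T N = 1` this recurrence determines all `T k`, and the
binomial formula satisfies it.

Forests are recognised by a height function which strictly decreases from each non-root to its
parent (`isForest_iff_height`); this makes both operations easy to check.
-/

open scoped Classical

/-- `f` is the parent map of a rooted forest: every orbit reaches a fixed point. -/
def IsForest {N : ℕ} (f : Fin N → Fin N) : Prop :=
  ∀ x, ∃ n : ℕ, f (f^[n] x) = f^[n] x

/-- `y` lies on the forward orbit of `x`. -/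
def Reaches {N : ℕ} (f : Fin N → Fin N) (x y : Fin N) : Prop :=
  ∃ n : ℕ, f^[n] x = y

/-- The rooted forests on `Fin N` with exactly `k` roots. -/
noncomputable def forests (N k : ℕ) : Finset (Fin N → Fin N) :=
  Finset.univ.filter fun f =>
    IsForest f ∧ (Finset.univ.filter fun x => f x = x).card = k

/-! ### Forests and height functions -/

lemma isForest_iff_height {N : ℕ} (f : Fin N → Fin N) :
    IsForest f ↔ ∃ h : Fin N → ℕ, ∀ x, f x ≠ x → h (f x) < h x := by
  constructor
  · intro hf
    -- the height is the distance to the root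
    refine ⟨fun x => Nat.find (hf x), fun x hx => ?_⟩
    have hs := Nat.find_spec (hf x)
    have h0 : Nat.find (hf x) ≠ 0 := by
      intro h
      rw [h] at hs
      exact hx hs
    obtain ⟨m, hm⟩ := Nat.exists_eq_succ_of_ne_zero h0
    rw [hm] at hs
    have : Nat.find (hf (f x)) ≤ m := Nat.find_min' _ hs
    simp only
    omega
  · rintro ⟨h, hh⟩ x
    induction hx : h x using Nat.strong_induction_on generalizing x with
    | _ m ih =>
      by_cases hfx : f x = x
      · exact ⟨0, hfx⟩
      · obtain ⟨n, hn⟩ := ih (h (f x)) (hx ▸ hh x hfx) (f x) rfl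
        exact ⟨n + 1, hn⟩

lemma reaches_step {N : ℕ} {f : Fin N → Fin N} {x r : Fin N} (hx : x ≠ r) :
    Reaches f x r ↔ Reaches f (f x) r := by
  constructor
  · rintro ⟨n, hn⟩
    cases n with
    | zero => exact absurd hn hx
    | succ n => exact ⟨n, hn⟩
  · rintro ⟨n, hn⟩
    exact ⟨n + 1, hn⟩

lemma iterate_stable {N : ℕ} {f : Fin N → Fin N} {x : Fin N} {n : ℕ}
    (h : f (f^[n] x) = f^[n] x) {m : ℕ} (hm : n ≤ m) : f^[m] x = f^[n] x := by
  obtain ⟨d, rfl⟩ := Nat.exists_eq_add_of_le' hm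
  rw [Function.iterate_add_apply]
  exact Function.iterate_fixed h d

lemma reaches_fixed_unique {N : ℕ} {f : Fin N → Fin N} {x r s : Fin N}
    (hr : f r = r) (hs : f s = s) (hxr : Reaches f x r) (hxs : Reaches f x s) : r = s := by
  obtain ⟨n, rfl⟩ := hxr
  obtain ⟨m, rfl⟩ := hxs
  rw [← iterate_stable hr (le_max_left n m), ← iterate_stable hs (le_max_right n m)]

/-- Cutting the edge above `x` leaves a forest. -/
lemma IsForest.cut {N : ℕ} {f : Fin N → Fin N} (hf : IsForest f) (x : Fin N) :
    IsForest (Function.update f x x) := by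
  rw [isForest_iff_height] at hf ⊢
  obtain ⟨h, hh⟩ := hf
  refine ⟨h, fun y hy => ?_⟩
  by_cases hyx : y = x
  · subst hyx
    simp at hy
  · rw [Function.update_of_ne hyx] at hy ⊢
    exact hh y hy

/-- After cutting the edge above `x`, the old parent of `x` is in another tree than `x`. -/
lemma IsForest.cut_not_reaches {N : ℕ} {f : Fin N → Fin N} (hf : IsForest f) {x : Fin N}
    (hx : f x ≠ x) : ¬ Reaches (Function.update f x x) (f x) x := by
  rw [isForest_iff_height] at hf
  obtain ⟨h, hh⟩ := hf
  rintro ⟨n, hn⟩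
  have key : ∀ n, h ((Function.update f x x)^[n] (f x)) ≤ h (f x) := by
    intro n
    induction n with
    | zero => exact le_rfl
    | succ n ih =>
      rw [Function.iterate_succ_apply']
      generalize (Function.update f x x)^[n] (f x) = y at ih
      by_cases hyx : y = x
      · subst hyx
        simpa using ih
      · rw [Function.update_of_ne hyx]
        by_cases hy : f y = y
        · rwa [hy]
        · exact (hh y hy).le.trans ih
  have h1 := key n
  rw [hn] at h1
  exact absurd (hh x hx) (not_lt.mpr h1)

/-- Making `v` the parent of `r` creates no cycle when the orbit of `v` avoids `r`. -/
lemma IsForest.graft {N : ℕ} {g : Fin N → Fin N} (hg : IsForest g) {r v : Fin N}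
    (hv : ¬ Reaches g v r) : IsForest (Function.update g r v) := by
  rw [isForest_iff_height] at hg ⊢
  obtain ⟨h, hh⟩ := hg
  -- the tree of `r` is lifted above the height of `v`
  refine ⟨fun y => h y + if Reaches g y r then 1 + h v else 0, fun y hy => ?_⟩
  by_cases hyr : y = r
  · subst hyr
    have : Reaches g y y := ⟨0, rfl⟩
    simp only [Function.update_self, hv, this, if_true, if_false]
    omega
  · rw [Function.update_of_ne hyr] at hy ⊢
    have := hh y hy
    simp only [← reaches_step hyr]
    omega

/-! ### The double counting -/

lemma fixed_update_cut {N : ℕ} (f : Fin N → Fin N) (x : Fin N) (hx : f x ≠ x) :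
    (Finset.univ.filter fun y => Function.update f x x y = y).card
      = (Finset.univ.filter fun y => f y = y).card + 1 := by
  have : (Finset.univ.filter fun y => Function.update f x x y = y)
      = insert x (Finset.univ.filter fun y => f y = y) := by
    ext y
    by_cases hyx : y = x
    · subst hyx
      simp
    · simp [hyx]
  rw [this, Finset.card_insert_of_notMem (by simpa using hx)]

/-- In a forest with `k + 1` roots, each vertex has exactly `k` roots of other trees. -/
lemma card_other_roots {N k : ℕ} {g : Fin N → Fin N} (hg : g ∈ forests N (k + 1)) (v : Fin N) :
    (Finset.univ.filter fun r => g r = r ∧ ¬ Reaches g v r).card = k := by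
  simp only [forests, Finset.mem_filter, Finset.mem_univ, true_and] at hg
  obtain ⟨n, hn⟩ := hg.1 v
  have : (Finset.univ.filter fun r => g r = r ∧ ¬ Reaches g v r)
      = (Finset.univ.filter fun r => g r = r).erase (g^[n] v) := by
    ext r
    simp only [Finset.mem_filter, Finset.mem_univ, true_and, Finset.mem_erase]
    constructor
    · rintro ⟨h1, h2⟩
      exact ⟨fun h => h2 ⟨n, h.symm⟩, h1⟩
    · rintro ⟨h1, h2⟩
      exact ⟨h2, fun h => h1 (reaches_fixed_unique h2 hn h ⟨n, rfl⟩)⟩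
  rw [this, Finset.card_erase_of_mem (by simpa using hn), hg.2]
  rfl

lemma card_nonroots {N k : ℕ} {f : Fin N → Fin N} (hf : f ∈ forests N k) :
    (Finset.univ.filter fun x => f x ≠ x).card = N - k := by
  simp only [forests, Finset.mem_filter, Finset.mem_univ, true_and] at hf
  have := Finset.card_filter_add_card_filter_not (s := Finset.univ) (fun x => f x = x)
  rw [hf.2, Finset.card_univ, Fintype.card_fin] at this
  simp only [ne_eq]
  omega

lemma forests_recurrence (N k : ℕ) :
    (forests N k).card * (N - k) = (forests N (k + 1)).card * (N * k) := by
  let A : Finset ((_ : Fin N → Fin N) × Fin N) :=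
    (forests N k).sigma fun f => Finset.univ.filter fun x => f x ≠ x
  let B : Finset ((_ : Fin N → Fin N) × ((_ : Fin N) × Fin N)) :=
    (forests N (k + 1)).sigma fun g => Finset.univ.sigma fun v =>
      Finset.univ.filter fun r => g r = r ∧ ¬ Reaches g v r
  have hA : A.card = (forests N k).card * (N - k) := by
    rw [Finset.card_sigma, Finset.sum_congr rfl fun f hf => card_nonroots hf,
      Finset.sum_const, smul_eq_mul]
  have hB : B.card = (forests N (k + 1)).card * (N * k) := by
    rw [Finset.card_sigma, Finset.sum_congr rfl (g := fun _ => N * k), Finset.sum_const,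
      smul_eq_mul]
    intro g hg
    rw [Finset.card_sigma, Finset.sum_congr rfl fun v _ => card_other_roots hg v,
      Finset.sum_const, smul_eq_mul, Finset.card_univ, Fintype.card_fin]
  rw [← hA, ← hB]
  refine Finset.card_bij' (fun p _ => ⟨Function.update p.1 p.2 p.2, p.1 p.2, p.2⟩)
    (fun q _ => ⟨Function.update q.1 q.2.2 q.2.1, q.2.2⟩) ?_ ?_ ?_ ?_
  · rintro ⟨f, x⟩ hp
    simp only [A, B, forests, Finset.mem_sigma, Finset.mem_filter, Finset.mem_univ,
      true_and] at hp ⊢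
    obtain ⟨⟨hf, hc⟩, hx⟩ := hp
    exact ⟨⟨hf.cut x, by rw [fixed_update_cut f x hx, hc]⟩, by simp, hf.cut_not_reaches hx⟩
  · rintro ⟨g, v, r⟩ hq
    simp only [A, B, forests, Finset.mem_sigma, Finset.mem_filter, Finset.mem_univ,
      true_and] at hq ⊢
    obtain ⟨⟨hg, hc⟩, hr, hv⟩ := hq
    have hvr : v ≠ r := fun h => hv ⟨0, h⟩
    have hne : Function.update g r v r ≠ r := by simpa using hvr
    refine ⟨⟨hg.graft hv, ?_⟩, hne⟩
    have := fixed_update_cut (Function.update g r v) r hne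
    rw [Function.update_idem, Function.update_eq_self_iff.mpr hr.symm, hc] at this
    omega
  · rintro ⟨f, x⟩ hp
    simp
  · rintro ⟨g, v, r⟩ hq
    simp only [B, Finset.mem_sigma, Finset.mem_filter, Finset.mem_univ, true_and] at hq
    have hu : Function.update g r r = g := Function.update_eq_self_iff.mpr hq.2.1.symm
    simp only [Function.update_idem, Function.update_self, hu]

lemma card_forests_self (N : ℕ) : (forests N N).card = 1 := by
  rw [Finset.card_eq_one]
  refine ⟨id, ?_⟩
  ext f
  simp only [forests, Finset.mem_filter, Finset.mem_univ, true_and, Finset.mem_singleton]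
  constructor
  · rintro ⟨-, h⟩
    have h' := Finset.eq_univ_of_card _ (h.trans (Fintype.card_fin N).symm)
    funext x
    have : x ∈ Finset.univ.filter fun x => f x = x := by
      rw [h']
      exact Finset.mem_univ x
    simpa using this
  · rintro rfl
    exact ⟨fun x => ⟨0, rfl⟩, by simp⟩

lemma card_forests (N j : ℕ) (hj : j < N) :
    (forests N (N - j)).card = (N - 1).choose j * N ^ j := by
  induction j with
  | zero => simpa using card_forests_self N
  | succ j ih =>
    have ih := ih (by omega)
    have h := forests_recurrence N (N - (j + 1))
    have e1 : N - (N - (j + 1)) = j + 1 := by omega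
    have e2 : N - (j + 1) + 1 = N - j := by omega
    rw [e1, e2, ih] at h
    have hc := Nat.choose_succ_right_eq (N - 1) j
    have e3 : N - 1 - j = N - (j + 1) := by omega
    rw [e3] at hc
    apply Nat.eq_of_mul_eq_mul_right (Nat.succ_pos j)
    calc _ = (N - 1).choose j * N ^ j * (N * (N - (j + 1))) := h
      _ = ((N - 1).choose j * (N - (j + 1))) * N ^ (j + 1) := by ring
      _ = _ := by rw [← hc, Nat.succ_eq_add_one]; ring

/-! ### Global orbit patterns of forests -/

lemma sameComp_symm {N : ℕ} {f : Fin N → Fin N} {x y : Fin N} (h : sameComp f x y) :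
    sameComp f y x := by
  obtain ⟨k, l, h⟩ := h
  exact ⟨l, k, h.symm⟩

lemma sameComp_trans {N : ℕ} {f : Fin N → Fin N} {x y z : Fin N} (h : sameComp f x y)
    (h' : sameComp f y z) : sameComp f x z := by
  obtain ⟨k, l, h⟩ := h
  obtain ⟨m, n, h'⟩ := h'
  refine ⟨m + k, l + n, ?_⟩
  rw [Function.iterate_add_apply, h, ← Function.iterate_add_apply, Nat.add_comm m l,
    Function.iterate_add_apply, h', ← Function.iterate_add_apply]

lemma gopOrd_eq_one_iff {N : ℕ} (f : Fin N → Fin N) (x : Fin N) :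
    gopOrd f x = 1 ↔ ∃ n, f (f^[n] x) = f^[n] x := by
  unfold gopOrd
  constructor
  · intro h
    have hm := Nat.sInf_mem (Nat.nonempty_of_sInf_eq_succ h)
    rw [h] at hm
    obtain ⟨-, K, hK⟩ := hm
    exact ⟨K, by rwa [Function.iterate_succ_apply'] at hK⟩
  · rintro ⟨K, hK⟩
    have hm : 1 ∈ {p : ℕ | 0 < p ∧ ∃ K : ℕ, f^[K + p] x = f^[K] x} :=
      ⟨one_pos, K, by rwa [Function.iterate_succ_apply']⟩
    have h1 := Nat.sInf_le hm
    have h2 := (Nat.sInf_mem ⟨1, hm⟩).1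
    omega

/-- All points of a component reach the same fixed point. -/
lemma reaches_of_sameComp {N : ℕ} {f : Fin N → Fin N} {x y r : Fin N} (h : sameComp f x y)
    (hr : f r = r) (hx : Reaches f x r) : Reaches f y r := by
  obtain ⟨k, l, h⟩ := h
  obtain ⟨n, rfl⟩ := hx
  refine ⟨n + l, ?_⟩
  rw [Function.iterate_add_apply, ← h, ← Function.iterate_add_apply,
    iterate_stable hr (Nat.le_add_right n k)]

/-- The least elements of the components of `f`. -/
noncomputable def compMins {N : ℕ} (f : Fin N → Fin N) : Finset (Fin N) :=
  Finset.univ.filter fun x : Fin N => ∀ y : Fin N, sameComp f x y → x ≤ y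

lemma exists_compMin {N : ℕ} (f : Fin N → Fin N) (x : Fin N) :
    ∃ m ∈ compMins f, sameComp f m x := by
  obtain ⟨m, hm, hmin⟩ := Finset.exists_min_image
    (Finset.univ.filter fun y => sameComp f y x) id ⟨x, by simpa using ⟨0, 0, rfl⟩⟩
  simp only [Finset.mem_filter, Finset.mem_univ, true_and, id] at hm hmin
  refine ⟨m, ?_, hm⟩
  simp only [compMins, Finset.mem_filter, Finset.mem_univ, true_and]
  exact fun y hy => hmin y (sameComp_trans (sameComp_symm hy) hm)

/-- Sending the least element of a component to its root is a bijection onto the roots. -/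
lemma IsForest.card_compMins {N : ℕ} {f : Fin N → Fin N} (hf : IsForest f) :
    (compMins f).card = (Finset.univ.filter fun x => f x = x).card := by
  choose n hn using hf
  refine Finset.card_bij (fun x _ => f^[n x] x) ?_ ?_ ?_
  · intro x _
    simpa using hn x
  · intro x hx y hy hxy
    simp only [compMins, Finset.mem_filter, Finset.mem_univ, true_and] at hx hy
    have hc : sameComp f x y := ⟨n x, n y, hxy⟩
    exact le_antisymm (hx y hc) (hy x (sameComp_symm hc))
  · intro r hr
    simp only [Finset.mem_filter, Finset.mem_univ, true_and] at hr
    obtain ⟨m, hm, hmr⟩ := exists_compMin f r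
    exact ⟨m, hm, reaches_fixed_unique (hn m) hr ⟨n m, rfl⟩
      (reaches_of_sameComp (sameComp_symm hmr) hr ⟨0, rfl⟩)⟩

lemma gop_eq_replicate_iff {N k : ℕ} (f : Fin N → Fin N) :
    gop f = List.replicate k 1 ↔ f ∈ forests N k := by
  have h1 : gop f = List.replicate k 1 ↔
      (compMins f).card = k ∧ ∀ x ∈ compMins f, gopOrd f x = 1 := by
    rw [List.eq_replicate_iff]
    simp [gop, compMins]
  have h2 : (∀ x ∈ compMins f, gopOrd f x = 1) ↔ IsForest f := by
    simp only [gopOrd_eq_one_iff]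
    constructor
    · intro h x
      obtain ⟨m, hm, hmx⟩ := exists_compMin f x
      obtain ⟨n, hn⟩ := h m hm
      obtain ⟨l, hl⟩ := reaches_of_sameComp hmx hn ⟨n, rfl⟩
      exact ⟨l, by rw [hl, hn]⟩
    · exact fun h x _ => h x
  rw [h1, h2]
  simp only [forests, Finset.mem_filter, Finset.mem_univ, true_and]
  constructor
  · rintro ⟨hc, hf⟩
    exact ⟨hf, hf.card_compMins ▸ hc⟩
  · rintro ⟨hf, hc⟩
    exact ⟨hf.card_compMins.trans hc, hf⟩

/-- for `1 ≤ k ≤ N`, the number of `f ∈ F_N` whose global orbit pattern is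
`[1, 1, …, 1]` (`k` ones) equals `C(N−1, N−k) · N^{N−k}`. -/
theorem card_gop_replicate_one (N k : ℕ) (hk : 1 ≤ k) (hkN : k ≤ N) :
    Nat.card {f : Fin N → Fin N // gop f = List.replicate k 1}
      = (N - 1).choose (N - k) * N ^ (N - k) := by
  have h := card_forests N (N - k) (by omega)
  rw [Nat.sub_sub_self hkN] at h
  rw [← h, Nat.card_congr (Equiv.subtypeEquivRight fun f => gop_eq_replicate_iff f)]
  simp
end

section
/- For every integer k with 1 ≤ k ≤ N, the number of functions f ∈ F_N whose global orbit pattern is [k] (that is, X_N has a single component under f, whose cycle has length k) equals C(N−1, N−k) · N^{N−k} · (k−1)! (equivalently, (N−1)! · N^{N−k} / (N−k)!). -/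
/-!
Call a function unicyclic of length `k` if it has a single component and its cycle has length `k`,
and let `A_k` be the number of such functions on a set of `N` points. The count rests on the
recursion `(N - k) A_k = N A_{k+1}` (`GopCount.card_recursion`), which comes from a bijection
(`GopCount.exchange`) between

* pairs `(f, w)` with `f` unicyclic of length `k` and `w` a non-periodic point of `f`, and
* pairs `(g, v)` with `g` unicyclic of length `k + 1` and `v` an arbitrary point.

Given `(f, w)`, put `v = f w`, let `c` be the first periodic point on the orbit of `v`, and let `p`
be the predecessor of `c` on the cycle. Redirecting `p ↦ w ↦ c` gives `g`. Since `v` does not lie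
in the subtree of `w`, its orbit still enters the cycle of `g` at `c`; so `w` is recovered as the
predecessor of `c` on the cycle of `g`, and the step is undone by `p ↦ c`, `w ↦ v`.

The recursion descends from `A_N = (N - 1)!`, the number of cyclic permutations of full length
(`GopCount.card_full`), and yields `A_k (N - k)! = (N - 1)! N ^ (N - k)`. Finally, `gop f = [k]`
holds exactly when `f` is unicyclic of length `k`.
-/

open scoped Classical

namespace GopCount

open Function

/-- For `k ≥ 1`: `f` has a single component, whose cycle has length `k` and passes through `c`. -/
def CycleAt {α : Type*} (f : α → α) (k : ℕ) (c : α) : Prop :=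
  minimalPeriod f c = k ∧ ∀ x, ∃ n, f^[n] x = c

/-- `f` has a single component, whose cycle has length `k` (for `k ≥ 1`). -/
def Unicyclic {α : Type*} (f : α → α) (k : ℕ) : Prop := ∃ c, CycleAt f k c

/-- `c` is the first periodic point on the forward orbit of `v` (the point `v` included). -/
def Entry {α : Type*} (f : α → α) (v c : α) : Prop :=
  c ∈ periodicPts f ∧ ∃ n, f^[n] v = c ∧ ∀ m < n, f^[m] v ∉ periodicPts f

/-! ### Moving a point into or out of the cycle -/

section General

variable {α : Type*} {f g : α → α} {k : ℕ} {c v w x : α}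

lemma CycleAt.mem_periodicPts (h : CycleAt f k c) (hk : 0 < k) : c ∈ periodicPts f := by
  rw [← minimalPeriod_pos_iff_mem_periodicPts, h.1]; exact hk

lemma iterate_mem_periodicPts (h : c ∈ periodicPts f) (i : ℕ) : f^[i] c ∈ periodicPts f := by
  obtain ⟨n, hn, hp⟩ := h
  exact ⟨n, hn, hp.apply_iterate i⟩

lemma CycleAt.exists_lt (h : CycleAt f k c) (hk : 0 < k) (hx : x ∈ periodicPts f) :
    ∃ i < k, f^[i] c = x := by
  obtain ⟨n, hn⟩ := h.2 x
  obtain ⟨q, hq, hp⟩ := hx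
  refine ⟨(n * q - n) % k, Nat.mod_lt _ hk, ?_⟩
  have h1 := iterate_mod_minimalPeriod_eq (f := f) (x := c) (n := n * q - n)
  rw [h.1] at h1
  rw [h1, ← hn, ← iterate_add_apply, Nat.sub_add_cancel (Nat.le_mul_of_pos_right n hq)]
  exact hp.const_mul n

lemma CycleAt.inj (h : CycleAt f k c) {i j : ℕ} (hi : i < k) (hj : j < k)
    (he : f^[i] c = f^[j] c) : i = j := by
  apply iterate_injOn_Iio_minimalPeriod (f := f) (x := c) _ _ he <;> simpa [h.1]

lemma CycleAt.iterate_period (h : CycleAt f k c) : f^[k] c = c := by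
  rw [← h.1]; exact iterate_minimalPeriod

lemma CycleAt.move (h : CycleAt f k c) (hk : 0 < k) (hx : x ∈ periodicPts f) :
    CycleAt f k x := by
  obtain ⟨i, -, hi⟩ := h.exists_lt hk hx
  refine ⟨?_, fun y => ?_⟩
  · rw [← hi, minimalPeriod_apply_iterate (h.mem_periodicPts hk), h.1]
  · obtain ⟨n, hn⟩ := h.2 y
    exact ⟨i + n, by rw [iterate_add_apply, hn, hi]⟩

lemma cycleAt_of (hk : 0 < k) (hper : f^[k] c = c)
    (hne : ∀ i, 0 < i → i < k → f^[i] c ≠ c) (hr : ∀ x, ∃ n, f^[n] x = c) : CycleAt f k c := by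
  refine ⟨?_, hr⟩
  have h1 : IsPeriodicPt f k c := hper
  by_contra hcon
  exact hne _ (h1.minimalPeriod_pos hk) (lt_of_le_of_ne (h1.minimalPeriod_le hk) hcon)
    iterate_minimalPeriod

lemma Entry.unique {d : α} (h : Entry f v c) (h' : Entry f v d) : c = d := by
  obtain ⟨hc, n, hn, hn'⟩ := h
  obtain ⟨hd, m, hm, hm'⟩ := h'
  rcases lt_trichotomy n m with hlt | rfl | hlt
  · exact absurd (hn ▸ hc) (hm' n hlt)
  · rw [← hn, hm]
  · exact absurd (hm ▸ hd) (hn' m hlt)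

lemma Unicyclic.exists_entry (h : Unicyclic f k) (hk : 0 < k) (v : α) :
    ∃ c, Entry f v c ∧ CycleAt f k c := by
  obtain ⟨c, hc⟩ := h
  have hex : ∃ n, f^[n] v ∈ periodicPts f := by
    obtain ⟨n, hn⟩ := hc.2 v
    exact ⟨n, hn ▸ hc.mem_periodicPts hk⟩
  classical
  exact ⟨_, ⟨Nat.find_spec hex, _, rfl, fun m hm => Nat.find_min hex hm⟩,
    hc.move hk (Nat.find_spec hex)⟩

lemma iterate_congr {n : ℕ} (h : ∀ m < n, g (f^[m] v) = f (f^[m] v)) :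
    ∀ m ≤ n, g^[m] v = f^[m] v := by
  intro m
  induction m with
  | zero => simp
  | succ m ih =>
    intro hm
    rw [iterate_succ_apply', iterate_succ_apply', ih (by omega), h m (by omega)]

/-- Insert the non-periodic point `w` into the `k`-cycle of `f`, just before `c`. -/
noncomputable def insertPt [DecidableEq α] (k : ℕ) (f : α → α) (w c : α) : α → α :=
  update (update f (f^[k - 1] c) w) w c

/-- Take the point `w` preceding `c` out of the `(k + 1)`-cycle of `g`, and map it to `v`. -/
noncomputable def removePt [DecidableEq α] (k : ℕ) (g : α → α) (v c : α) : α → α :=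
  update (update g (g^[k - 1] c) c) (g^[k] c) v

variable [DecidableEq α]

lemma insert_iterate (hk : 0 < k) (h : CycleAt f k c) (hw : w ∉ periodicPts f) :
    ∀ i ≤ k - 1, (insertPt k f w c)^[i] c = f^[i] c := by
  apply iterate_congr
  intro m hm
  have h1 : f^[m] c ≠ w := fun e => hw (e ▸ iterate_mem_periodicPts (h.mem_periodicPts hk) m)
  have h2 : f^[m] c ≠ f^[k - 1] c := fun e => by
    have := h.inj (by omega) (by omega) e
    omega
  simp [insertPt, h1, h2]

lemma insert_iterate_k (hk : 0 < k) (h : CycleAt f k c) (hw : w ∉ periodicPts f) :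
    (insertPt k f w c)^[k] c = w := by
  obtain ⟨j, rfl⟩ : ∃ j, k = j + 1 := ⟨k - 1, by omega⟩
  rw [iterate_succ_apply', insert_iterate hk h hw j (by simp)]
  have h1 : f^[j] c ≠ w := fun e => hw (e ▸ iterate_mem_periodicPts (h.mem_periodicPts hk) j)
  simp [insertPt, h1]

lemma insert_cycleAt (hk : 0 < k) (h : CycleAt f k c) (hw : w ∉ periodicPts f) :
    CycleAt (insertPt k f w c) (k + 1) c := by
  have hcw : w ≠ c := fun e => hw (e ▸ h.mem_periodicPts hk)
  have hgw : insertPt k f w c w = c := by simp [insertPt]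
  refine cycleAt_of (by omega) ?_ ?_ ?_
  · rw [iterate_succ_apply', insert_iterate_k hk h hw, hgw]
  · intro i hi hik e
    rcases Nat.lt_succ_iff_lt_or_eq.1 hik with hlt | rfl
    · rw [insert_iterate hk h hw i (by omega)] at e
      have := h.inj (i := i) (j := 0) hlt hk e
      omega
    · exact hcw ((insert_iterate_k hk h hw).symm.trans e)
  · intro x
    obtain ⟨n, hn⟩ := h.2 x
    induction n generalizing x with
    | zero => exact ⟨0, hn⟩
    | succ n ih =>
      obtain ⟨m, hm⟩ := ih (f x) hn
      by_cases hx : x = w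
      · exact ⟨1, by simp [hx, hgw]⟩
      · by_cases hx' : x = f^[k - 1] c
        · have hgp : insertPt k f w c x = w := by
            rw [hx'] at hx ⊢
            simp [insertPt, hx]
          exact ⟨2, by simp [hgp, hgw]⟩
        · refine ⟨m + 1, ?_⟩
          rw [iterate_succ_apply]
          have : insertPt k f w c x = f x := by simp [insertPt, hx, hx']
          rw [this, hm]

lemma insert_entry (hk : 0 < k) (h : CycleAt f k c) (hw : w ∉ periodicPts f)
    (he : Entry f (f w) c) : Entry (insertPt k f w c) (f w) c := by
  have hc := insert_cycleAt hk h hw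
  obtain ⟨-, n, hn, hn'⟩ := he
  -- The orbit of `f w` never returns to `w`, because `w` is not periodic.
  have hnw : ∀ m, f^[m] (f w) ≠ w := fun m e => hw ⟨m + 1, by omega, e⟩
  have hit : ∀ m ≤ n, (insertPt k f w c)^[m] (f w) = f^[m] (f w) := by
    apply iterate_congr
    intro m hm
    have h2 : f^[m] (f w) ≠ f^[k - 1] c := fun e =>
      hn' m hm (e ▸ iterate_mem_periodicPts (h.mem_periodicPts hk) _)
    simp [insertPt, hnw m, h2]
  refine ⟨hc.mem_periodicPts (by omega), n, (hit n le_rfl).trans hn, fun m hm hp => ?_⟩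
  rw [hit m hm.le] at hp
  obtain ⟨i, hi, hi'⟩ := hc.exists_lt (by omega) hp
  rcases Nat.lt_succ_iff_lt_or_eq.1 hi with hlt | rfl
  · rw [insert_iterate hk h hw i (by omega)] at hi'
    exact hn' m hm (hi' ▸ iterate_mem_periodicPts (h.mem_periodicPts hk) _)
  · rw [insert_iterate_k hk h hw] at hi'
    exact hnw m hi'.symm

lemma remove_iterate (h : CycleAt g (k + 1) c) :
    ∀ i ≤ k - 1, (removePt k g v c)^[i] c = g^[i] c := by
  apply iterate_congr
  intro m hm
  have h1 : g^[m] c ≠ g^[k] c := fun e => by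
    have := h.inj (by omega) (by omega) e
    omega
  have h2 : g^[m] c ≠ g^[k - 1] c := fun e => by
    have := h.inj (by omega) (by omega) e
    omega
  simp [removePt, h1, h2]

lemma remove_iterate_k (hk : 0 < k) (h : CycleAt g (k + 1) c) :
    (removePt k g v c)^[k] c = c := by
  have h1 : g^[k - 1] c ≠ g^[k] c := fun e => by
    have := h.inj (by omega) (by omega) e
    omega
  have : (removePt k g v c)^[k - 1 + 1] c = c := by
    rw [iterate_succ_apply', remove_iterate h _ le_rfl]
    simp [removePt, h1]
  rwa [Nat.sub_add_cancel hk] at this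

/-- The orbit of `v` up to its entry into the cycle of `g` is not affected by the removal. -/
lemma remove_iterate_tail (h : CycleAt g (k + 1) c) {n : ℕ}
    (hn' : ∀ m < n, g^[m] v ∉ periodicPts g) :
    ∀ m ≤ n, (removePt k g v c)^[m] v = g^[m] v := by
  apply iterate_congr
  intro m hm
  have hne : ∀ i, g^[m] v ≠ g^[i] c := fun i e =>
    hn' m hm (e ▸ iterate_mem_periodicPts (h.mem_periodicPts (by omega)) _)
  simp [removePt, hne]

lemma remove_cycleAt (hk : 0 < k) (h : CycleAt g (k + 1) c) (he : Entry g v c) :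
    CycleAt (removePt k g v c) k c := by
  refine cycleAt_of hk (remove_iterate_k hk h) ?_ ?_
  · intro i hi hik e
    rw [remove_iterate h i (by omega)] at e
    have := h.inj (i := i) (j := 0) (by omega) (by omega) e
    omega
  · intro x
    obtain ⟨n, hn⟩ := h.2 x
    induction n generalizing x with
    | zero => exact ⟨0, hn⟩
    | succ n ih =>
      obtain ⟨m, hm⟩ := ih (g x) hn
      by_cases hx : x = g^[k] c
      · obtain ⟨-, q, hq, hq'⟩ := he
        refine ⟨q + 1, ?_⟩
        rw [iterate_succ_apply]
        have : removePt k g v c x = v := by simp [removePt, hx]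
        rw [this, remove_iterate_tail h hq' q le_rfl, hq]
      · by_cases hx' : x = g^[k - 1] c
        · refine ⟨1, ?_⟩
          rw [hx'] at hx
          simp [hx', removePt, hx]
        · refine ⟨m + 1, ?_⟩
          rw [iterate_succ_apply]
          have : removePt k g v c x = g x := by simp [removePt, hx, hx']
          rw [this, hm]

lemma remove_periodic (hk : 0 < k) (h : CycleAt g (k + 1) c) (he : Entry g v c)
    (hx : x ∈ periodicPts (removePt k g v c)) : ∃ i < k, g^[i] c = x := by
  obtain ⟨i, hi, hi'⟩ := (remove_cycleAt hk h he).exists_lt hk hx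
  exact ⟨i, hi, by rw [← hi', remove_iterate h i (by omega)]⟩

lemma remove_entry (hk : 0 < k) (h : CycleAt g (k + 1) c) (he : Entry g v c) :
    Entry (removePt k g v c) v c := by
  have hc := remove_cycleAt hk h he
  have he' := he
  obtain ⟨hcp, n, hn, hn'⟩ := he'
  have hit := remove_iterate_tail h hn'
  refine ⟨hc.mem_periodicPts hk, n, (hit n le_rfl).trans hn, fun m hm hp => ?_⟩
  rw [hit m hm.le] at hp
  obtain ⟨i, hi, hi'⟩ := remove_periodic hk h he hp
  exact hn' m hm (hi' ▸ iterate_mem_periodicPts hcp _)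

lemma remove_not_periodic (hk : 0 < k) (h : CycleAt g (k + 1) c) (he : Entry g v c) :
    g^[k] c ∉ periodicPts (removePt k g v c) := fun hp => by
  obtain ⟨i, hi, hi'⟩ := remove_periodic hk h he hp
  have := h.inj (by omega) (by omega) hi'
  omega

lemma remove_insert (hk : 0 < k) (h : CycleAt f k c) (hw : w ∉ periodicPts f) :
    removePt k (insertPt k f w c) (f w) c = f := by
  have h1 : f^[k - 1] c ≠ w := fun e =>
    hw (e ▸ iterate_mem_periodicPts (h.mem_periodicPts hk) _)
  have h2 : f (f^[k - 1] c) = c := by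
    rw [← iterate_succ_apply' f, Nat.succ_eq_add_one, Nat.sub_add_cancel hk, h.iterate_period]
  rw [removePt, insert_iterate_k hk h hw, insert_iterate hk h hw _ le_rfl]
  ext x
  by_cases hx : x = w
  · simp [hx]
  · by_cases hx' : x = f^[k - 1] c
    · simp [hx', h1, h2]
    · simp [insertPt, hx, hx']

lemma insert_remove (hk : 0 < k) (h : CycleAt g (k + 1) c) :
    insertPt k (removePt k g v c) (g^[k] c) c = g := by
  have h1 : g^[k - 1] c ≠ g^[k] c := fun e => by
    have := h.inj (by omega) (by omega) e
    omega
  have h2 : g (g^[k - 1] c) = g^[k] c := by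
    rw [← iterate_succ_apply' g, Nat.succ_eq_add_one, Nat.sub_add_cancel hk]
  have h3 : g (g^[k] c) = c := by
    rw [← iterate_succ_apply' g]; exact h.iterate_period
  rw [insertPt, remove_iterate h _ le_rfl]
  ext x
  by_cases hx : x = g^[k] c
  · simp [hx, h3]
  · by_cases hx' : x = g^[k - 1] c
    · simp [hx', h1, h2]
    · simp [removePt, hx, hx']

/-- The bijection behind the recursion: a non-periodic point `w` of a function with a `k`-cycle
is moved into the cycle, and its former image `v = f w` is recorded. -/
noncomputable def exchange (hk : 0 < k) :
    {t : (α → α) × α × α // CycleAt t.1 k t.2.2 ∧ t.2.1 ∉ periodicPts t.1 ∧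
      Entry t.1 (t.1 t.2.1) t.2.2} ≃
    {t : (α → α) × α × α // CycleAt t.1 (k + 1) t.2.2 ∧ Entry t.1 t.2.1 t.2.2} where
  toFun t := ⟨(insertPt k t.1.1 t.1.2.1 t.1.2.2, t.1.1 t.1.2.1, t.1.2.2),
    insert_cycleAt hk t.2.1 t.2.2.1, insert_entry hk t.2.1 t.2.2.1 t.2.2.2⟩
  invFun t := ⟨(removePt k t.1.1 t.1.2.1 t.1.2.2, t.1.1^[k] t.1.2.2, t.1.2.2),
    remove_cycleAt hk t.2.1 t.2.2, remove_not_periodic hk t.2.1 t.2.2, by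
      have : removePt k t.1.1 t.1.2.1 t.1.2.2 (t.1.1^[k] t.1.2.2) = t.1.2.1 := by
        simp [removePt]
      simpa only [this] using remove_entry hk t.2.1 t.2.2⟩
  left_inv := by
    rintro ⟨⟨f, w, c⟩, h1, h2, h3⟩
    simp only [Subtype.mk.injEq, Prod.mk.injEq, and_true]
    exact ⟨remove_insert hk h1 h2, insert_iterate_k hk h1 h2⟩
  right_inv := by
    rintro ⟨⟨g, v, c⟩, h1, h2⟩
    simp only [Subtype.mk.injEq, Prod.mk.injEq, and_true]
    exact ⟨insert_remove hk h1, by simp [removePt]⟩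

end General

/-! ### Counting unicyclic functions -/

section Counting

variable {α : Type*} [Fintype α] {f : α → α} {k : ℕ}

lemma card_not_periodic (h : Unicyclic f k) (hk : 0 < k) :
    Nat.card {w : α // w ∉ periodicPts f} = Fintype.card α - k := by
  classical
  obtain ⟨c, hc⟩ := h
  have himg : Finset.univ.filter (fun w => w ∈ periodicPts f)
      = (Finset.range k).image (fun i => f^[i] c) := by
    ext x
    simp only [Finset.mem_filter, Finset.mem_univ, true_and, Finset.mem_image, Finset.mem_range]
    refine ⟨hc.exists_lt hk, ?_⟩
    rintro ⟨i, -, rfl⟩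
    exact iterate_mem_periodicPts (hc.mem_periodicPts hk) i
  have hcard : Fintype.card {w : α // w ∈ periodicPts f} = k := by
    rw [Fintype.card_subtype, himg, Finset.card_image_of_injOn, Finset.card_range]
    intro i hi j hj e
    exact hc.inj (by simpa using hi) (by simpa using hj) e
  rw [Nat.card_eq_fintype_card, Fintype.card_subtype_compl, hcard]

/-- The recursion `(|α| - k) A_k = |α| A_{k+1}` for the numbers `A_k` of unicyclic functions. -/
lemma card_recursion (hk : 0 < k) :
    Nat.card {f : α → α // Unicyclic f k} * (Fintype.card α - k)
      = Nat.card {f : α → α // Unicyclic f (k + 1)} * Fintype.card α := by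
  classical
  have e1 : (Σ f : {f : α → α // Unicyclic f k}, {w : α // w ∉ periodicPts f.1}) ≃
      {t : (α → α) × α × α // CycleAt t.1 k t.2.2 ∧ t.2.1 ∉ periodicPts t.1 ∧
        Entry t.1 (t.1 t.2.1) t.2.2} := by
    symm
    refine Equiv.ofBijective (fun t => ⟨⟨t.1.1, _, t.2.1⟩, ⟨t.1.2.1, t.2.2.1⟩⟩) ⟨?_, ?_⟩
    · rintro ⟨⟨f, w, c⟩, h1, h2, h3⟩ ⟨⟨f', w', c'⟩, h1', h2', h3'⟩ e
      simp only [Sigma.mk.injEq] at e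
      obtain ⟨e0, e⟩ := e
      obtain rfl : f = f' := congrArg Subtype.val e0
      obtain rfl : w = w' := congrArg Subtype.val (eq_of_heq e)
      simp only [Subtype.mk.injEq, Prod.mk.injEq, true_and]
      exact h3.unique h3'
    · rintro ⟨⟨f, hf⟩, ⟨w, hw⟩⟩
      obtain ⟨c, hc, hc'⟩ := hf.exists_entry hk (f w)
      exact ⟨⟨(f, w, c), hc', hw, hc⟩, rfl⟩
  have e2 : {f : α → α // Unicyclic f (k + 1)} × α ≃
      {t : (α → α) × α × α // CycleAt t.1 (k + 1) t.2.2 ∧ Entry t.1 t.2.1 t.2.2} := by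
    symm
    refine Equiv.ofBijective (fun t => ⟨⟨t.1.1, _, t.2.1⟩, t.1.2.1⟩) ⟨?_, ?_⟩
    · rintro ⟨⟨f, w, c⟩, h1, h2⟩ ⟨⟨f', w', c'⟩, h1', h2'⟩ e
      obtain rfl : f = f' := congrArg (fun z => z.1.1) e
      obtain rfl : w = w' := congrArg Prod.snd e
      simp only [Subtype.mk.injEq, Prod.mk.injEq, true_and]
      exact h2.unique h2'
    · rintro ⟨⟨f, hf⟩, w⟩
      obtain ⟨c, hc, hc'⟩ := hf.exists_entry (by omega) w
      exact ⟨⟨(f, w, c), hc', hc⟩, rfl⟩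
  have hc := Nat.card_congr ((e1.trans (exchange hk)).trans e2.symm)
  rw [Nat.card_prod, Nat.card_sigma] at hc
  simp only [fun f : {f : α → α // Unicyclic f k} => card_not_periodic f.2 hk] at hc
  rw [Nat.card_eq_fintype_card (α := α)] at hc
  rw [← hc]
  simp

/-- A unicyclic function whose cycle is everything is a full-length cyclic permutation. -/
lemma card_full (hα : 0 < Fintype.card α) :
    Nat.card {f : α → α // Unicyclic f (Fintype.card α)} = (Fintype.card α - 1).factorial := by
  classical
  rcases Nat.lt_or_ge (Fintype.card α) 2 with h2 | h2
  · have h1 : Fintype.card α = 1 := by omega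
    have : Unique α := (Fintype.card_eq_one_iff_nonempty_unique.1 h1).some
    have hu : ∀ f : α → α, Unicyclic f 1 := fun f =>
      ⟨default, cycleAt_of one_pos (Subsingleton.elim _ _) (by omega)
        fun x => ⟨0, Subsingleton.elim _ _⟩⟩
    rw [h1]
    simp [hu]
  · have hp := Equiv.Perm.card_of_cycleType_singleton (α := α) h2 le_rfl
    rw [Nat.choose_self, mul_one] at hp
    rw [← hp, ← Fintype.card_subtype,
      ← Nat.card_eq_fintype_card (α := {g : Equiv.Perm α // g.cycleType = {Fintype.card α}})]
    have key : ∀ g : Equiv.Perm α,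
        g.cycleType = {Fintype.card α} ↔ Unicyclic g (Fintype.card α) := by
      intro g
      constructor
      · intro hg
        have hcyc : g.IsCycle := by rw [← Equiv.Perm.card_cycleType_eq_one, hg]; simp
        rw [hcyc.cycleType, Multiset.singleton_inj, Finset.card_eq_iff_eq_univ] at hg
        have hmove : ∀ x, g x ≠ x := fun x => by
          rw [← Equiv.Perm.mem_support, hg]; exact Finset.mem_univ x
        have hper : ∀ x, x ∈ periodicPts g := fun x =>
          ⟨orderOf g, orderOf_pos g, by
            rw [IsPeriodicPt, IsFixedPt, Equiv.Perm.iterate_eq_pow, pow_orderOf_eq_one]; rfl⟩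
        obtain ⟨c⟩ := Fintype.card_pos_iff.1 hα
        have hc : CycleAt g (minimalPeriod g c) c := ⟨rfl, fun x => by
          obtain ⟨i, hi⟩ := hcyc.exists_pow_eq (hmove x) (hmove c)
          exact ⟨i, by rw [Equiv.Perm.iterate_eq_pow, hi]⟩⟩
        have h0 := card_not_periodic ⟨c, hc⟩ (minimalPeriod_pos_of_mem_periodicPts (hper c))
        have hle : minimalPeriod g c ≤ Fintype.card α := minimalPeriod_le_card
        have hz : Nat.card {w : α // w ∉ periodicPts g} = 0 := by simp [hper]
        rw [show Fintype.card α = minimalPeriod g c by omega]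
        exact ⟨c, hc⟩
      · rintro ⟨c, hc⟩
        have hgc : g c ≠ c := fun e => by
          have := (show IsPeriodicPt g 1 c from e).minimalPeriod_le one_pos
          rw [hc.1] at this
          omega
        have hmove : ∀ x, g x ≠ x := fun x e => by
          obtain ⟨n, hn⟩ := hc.2 x
          rw [iterate_fixed e] at hn
          exact hgc (hn ▸ e)
        have hcyc : g.IsCycle := ⟨c, hgc, fun y _ => by
          obtain ⟨n, hn⟩ := hc.2 y
          rw [Equiv.Perm.iterate_eq_pow] at hn
          exact Equiv.Perm.SameCycle.symm ⟨n, by simpa using hn⟩⟩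
        rw [hcyc.cycleType, Multiset.singleton_inj, Finset.card_eq_iff_eq_univ]
        ext x
        simp [hmove]
    symm
    refine Nat.card_congr (Equiv.ofBijective (fun g => ⟨g.1, (key g.1).1 g.2⟩) ⟨?_, ?_⟩)
    · rintro ⟨g, hg⟩ ⟨g', hg'⟩ e
      simpa using e
    · rintro ⟨f, hf⟩
      have hs : Surjective f := by
        intro x
        have h0 := card_not_periodic hf hα
        rw [Nat.sub_self, Finite.card_eq_zero_iff] at h0
        have hx : x ∈ periodicPts f := by
          by_contra hx
          exact h0.false ⟨x, hx⟩
        obtain ⟨n, hn, hx⟩ := hx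
        obtain ⟨m, rfl⟩ : ∃ m, n = m + 1 := ⟨n - 1, by omega⟩
        exact ⟨f^[m] x, by rw [← iterate_succ_apply' f]; exact hx⟩
      let g := Equiv.ofBijective f (Finite.injective_iff_bijective.1
        (Finite.injective_iff_surjective.2 hs))
      exact ⟨⟨g, (key g).2 hf⟩, rfl⟩

/-- The solution of the recursion, indexed by the number `j` of non-periodic points. -/
lemma card_unicyclic_mul (j : ℕ) (hj : j < Fintype.card α) :
    Nat.card {f : α → α // Unicyclic f (Fintype.card α - j)} * j.factorial
      = (Fintype.card α - 1).factorial * Fintype.card α ^ j := by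
  induction j with
  | zero => rw [Nat.sub_zero, Nat.factorial_zero, mul_one, pow_zero, mul_one, card_full hj]
  | succ j ih =>
    have hr := card_recursion (α := α) (k := Fintype.card α - (j + 1)) (by omega)
    rw [show Fintype.card α - (Fintype.card α - (j + 1)) = j + 1 by omega,
      show Fintype.card α - (j + 1) + 1 = Fintype.card α - j by omega] at hr
    rw [Nat.factorial_succ, ← mul_assoc, hr, mul_right_comm, ih (by omega), pow_succ, mul_assoc]

end Counting

/-! ### Global orbit patterns of length one -/

section Pattern

variable {N : ℕ} {f : Fin N → Fin N} {k : ℕ}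

lemma sameComp_trans {x y z : Fin N} (h : sameComp f x y) (h' : sameComp f y z) :
    sameComp f x z := by
  obtain ⟨a, b, h⟩ := h
  obtain ⟨a', b', h'⟩ := h'
  refine ⟨a' + a, b + b', ?_⟩
  rw [iterate_add_apply, h, iterate_add_apply, ← h', ← iterate_add_apply, ← iterate_add_apply,
    add_comm]

lemma sameComp_symm {x y : Fin N} (h : sameComp f x y) : sameComp f y x := by
  obtain ⟨a, b, h⟩ := h
  exact ⟨b, a, h.symm⟩

lemma exists_least (y : Fin N) :
    ∃ x, sameComp f y x ∧ ∀ z, sameComp f x z → x ≤ z := by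
  obtain ⟨x, hx, hmin⟩ := (Finset.univ.filter (fun x => sameComp f y x)).exists_min_image id
    ⟨y, by simpa using ⟨0, 0, rfl⟩⟩
  simp only [Finset.mem_filter, Finset.mem_univ, true_and, id] at hx hmin
  exact ⟨x, hx, fun z hz => hmin z (sameComp_trans hx hz)⟩

lemma unicyclic_of_gop (hk : 0 < k) (h : gop f = [k]) : Unicyclic f k := by
  rw [gop, List.map_eq_singleton_iff] at h
  obtain ⟨x, hx, hord⟩ := h
  have hall : ∀ y, sameComp f y x := by
    intro y
    obtain ⟨z, hz, hz'⟩ := exists_least (f := f) y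
    have hmem : z ∈ (Finset.univ.filter (fun x : Fin N =>
        ∀ y : Fin N, sameComp f x y → x ≤ y)).sort (· ≤ ·) := by
      simpa using hz'
    rw [hx, List.mem_singleton] at hmem
    exact hmem ▸ hz
  have hmem : k ∈ {p : ℕ | 0 < p ∧ ∃ K : ℕ, f^[K + p] x = f^[K] x} := by
    rw [← hord]
    apply Nat.sInf_mem
    apply Nat.nonempty_of_pos_sInf
    rw [gopOrd] at hord
    omega
  obtain ⟨-, K, hK⟩ := hmem
  rw [add_comm, iterate_add_apply] at hK
  refine ⟨f^[K] x, cycleAt_of hk hK ?_ ?_⟩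
  · intro i hi hik e
    rw [← iterate_add_apply, add_comm] at e
    have : gopOrd f x ≤ i := Nat.sInf_le ⟨hi, K, e⟩
    omega
  · intro y
    obtain ⟨a, b, hab⟩ := hall y
    -- `K + b * k - b` further steps from `f^[b] x` land on the cycle at `f^[K] x`.
    refine ⟨K + b * k - b + a, ?_⟩
    have hle : b ≤ K + b * k := (Nat.le_mul_of_pos_right b hk).trans (Nat.le_add_left _ _)
    rw [iterate_add_apply, hab, ← iterate_add_apply, Nat.sub_add_cancel hle, add_comm,
      iterate_add_apply]
    exact (show IsPeriodicPt f k _ from hK).const_mul b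

lemma gop_of_unicyclic (hk : 0 < k) (h : Unicyclic f k) : gop f = [k] := by
  obtain ⟨c, hc⟩ := h
  have : NeZero N := ⟨by rintro rfl; exact c.elim0⟩
  have hall : ∀ x y, sameComp f x y := by
    intro x y
    obtain ⟨a, ha⟩ := hc.2 x
    obtain ⟨b, hb⟩ := hc.2 y
    exact ⟨a, b, ha.trans hb.symm⟩
  have hfil : Finset.univ.filter (fun x : Fin N => ∀ y : Fin N, sameComp f x y → x ≤ y)
      = {0} := by
    ext x
    simp only [hall, true_imp_iff, Finset.mem_filter, Finset.mem_univ, true_and,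
      Finset.mem_singleton]
    exact ⟨fun h => le_antisymm (h 0) (Fin.zero_le x), fun h y => h ▸ Fin.zero_le y⟩
  have hord : gopOrd f 0 = k := by
    apply le_antisymm
    · obtain ⟨n, hn⟩ := hc.2 0
      refine Nat.sInf_le ⟨hk, n, ?_⟩
      rw [add_comm, iterate_add_apply, hn, hc.iterate_period]
    · refine le_csInf ⟨k, hk, ?_⟩ ?_
      · obtain ⟨n, hn⟩ := hc.2 0
        refine ⟨n, ?_⟩
        rw [add_comm, iterate_add_apply, hn, hc.iterate_period]
      · rintro p ⟨hp, K, hK⟩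
        obtain ⟨t, ht⟩ := hc.2 (f^[K] 0)
        have hpc : IsPeriodicPt f p c := by
          rw [IsPeriodicPt, IsFixedPt, ← ht, ← iterate_add_apply, add_comm p t,
            iterate_add_apply, ← iterate_add_apply f p K, add_comm p K, hK]
        rw [← hc.1]
        exact hpc.minimalPeriod_le hp
  rw [gop, hfil]
  simp [hord]

end Pattern

end GopCount

/-- for `1 ≤ k ≤ N`, the number of `f ∈ F_N` whose global orbit pattern is
`[k]` equals `C(N−1, N−k) · N^{N−k} · (k−1)!`. -/
theorem card_gop_single (N k : ℕ) (hk : 1 ≤ k) (hkN : k ≤ N) :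
    Nat.card {f : Fin N → Fin N // gop f = [k]}
      = (N - 1).choose (N - k) * N ^ (N - k) * (k - 1).factorial := by
  have hcount : Nat.card {f : Fin N → Fin N // gop f = [k]}
      = Nat.card {f : Fin N → Fin N // GopCount.Unicyclic f k} :=
    Nat.card_congr (Equiv.subtypeEquivRight fun f =>
      ⟨GopCount.unicyclic_of_gop hk, GopCount.gop_of_unicyclic hk⟩)
  have hmul := GopCount.card_unicyclic_mul (α := Fin N) (N - k) (by rw [Fintype.card_fin]; omega)
  rw [Fintype.card_fin, Nat.sub_sub_self hkN] at hmul
  have hch := Nat.choose_mul_factorial_mul_factorial (n := N - 1) (k := N - k) (by omega)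
  rw [show N - 1 - (N - k) = k - 1 by omega] at hch
  apply Nat.eq_of_mul_eq_mul_right (Nat.factorial_pos (N - k))
  rw [hcount, hmul, ← hch]
  ring
end
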